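/- Let u be a continuous function on ℝ×ℝ₊ that for each t is concave in x, nonincreasing in t, bounded between two potential functions U_μ - C ≤ u(·,t) ≤ U_ν, and satisfying u(x,t) - U_ν(x) → 0 as |x| → ∞ for each fixed t. Then for each t there exists a probability measure μ_t on ℝ with u(·,t) = U_{μ_t}; moreover the pointwise limit û(x) = lim_{t→∞} u(x,t) exists and there exist a constant C_L ≥ 0 and a probability measure μ̂ with μ_t ⇒ μ̂ weakly and û = U_{μ̂} - C_L. -/

import Mathlib

open MeasureTheory Set Filter

/-!
A potential `v = U_ρ` has right derivative `1 - 2 F`, where `F` is the distribution function of `ρ`.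
So for a concave `v` with `v x + x → a` at `+∞` and `v x - x → b` at `-∞`, the function
`(1 - v'₊) / 2` is, up to countably many points, the distribution function of a probability measure
`ρ`. Its integrals over the two tails recover `∫ |y - x| dρ`, and `v = U_ρ + (a + b) / 2`. The
constant vanishes as soon as `v` has the asymptotes of a potential, which is the case for each
`u(·, t)`. The decreasing limit `û` lies between `U_μ - C` and one of the `u(·, t)`, so it has
asymptotes with `a + b ≤ 0`, and one takes `C_L = -(a + b) / 2`.

Adding a constant to a potential leaves its difference quotients unchanged, and those over `[x, y]`
squeeze `1 - 2 F` between its values at the endpoints. Pointwise convergence of potentials up to a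
constant therefore forces the distribution functions to converge at the continuity points of the
limit.
-/

open ProbabilityTheory Topology

section ConvexFunctions

variable {g h k l : ℝ → ℝ} {a b p q s : ℝ}

lemma monotone_of_concaveOn_of_eventually_ge (hh : ConcaveOn ℝ univ h)
    (hb : ∀ᶠ x in atTop, b ≤ h x) : Monotone h := by
  intro x y hxy
  by_contra! hyx
  have hxy : x < y := hxy.lt_of_ne (by rintro rfl; exact hyx.false)
  have hslope : (h y - h x) / (y - x) < 0 := div_neg_of_neg_of_pos (by linarith) (by linarith)
  have hline : Tendsto (fun z => h y + (h y - h x) / (y - x) * (z - y)) atTop atBot :=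
    tendsto_atBot_add_const_left _ _
      ((tendsto_atTop_add_const_right _ (-y) tendsto_id).const_mul_atTop_of_neg hslope)
  obtain ⟨z, hbz, hzb, hyz⟩ :=
    (hb.and ((hline.eventually_lt_atBot b).and (eventually_gt_atTop y))).exists
  have hsecant := hh.slope_anti_adjacent (mem_univ x) (mem_univ z) hxy hyz
  rw [div_le_iff₀ (by linarith)] at hsecant
  linarith

lemma exists_tendsto_atTop_of_concaveOn (hh : ConcaveOn ℝ univ h)
    (hl : Tendsto l atTop (𝓝 p)) (hk : Tendsto k atTop (𝓝 q))
    (hlh : ∀ x, l x ≤ h x) (hhk : ∀ x, h x ≤ k x) : ∃ r ≤ q, Tendsto h atTop (𝓝 r) := by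
  have hlower : ∀ᶠ x in atTop, p - 1 ≤ h x :=
    (hl.eventually_const_lt (sub_one_lt p)).mono fun x hx => hx.le.trans (hlh x)
  have hupper : ∀ᶠ x in atTop, h x < q + 1 :=
    (hk.eventually_lt_const (lt_add_one q)).mono fun x hx => (hhk x).trans_lt hx
  rcases tendsto_atTop_of_monotone (monotone_of_concaveOn_of_eventually_ge hh hlower) with
    hinfty | ⟨r, hr⟩
  · obtain ⟨x, hx, hx'⟩ := (hupper.and (hinfty.eventually_ge_atTop (q + 1))).exists
    exact absurd hx hx'.not_gt
  · exact ⟨r, le_of_tendsto_of_tendsto' hr hk hhk, hr⟩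

lemma exists_tendsto_atBot_of_concaveOn (hh : ConcaveOn ℝ univ h)
    (hl : Tendsto l atBot (𝓝 p)) (hk : Tendsto k atBot (𝓝 q))
    (hlh : ∀ x, l x ≤ h x) (hhk : ∀ x, h x ≤ k x) : ∃ r ≤ q, Tendsto h atBot (𝓝 r) := by
  have hneg : ConcaveOn ℝ univ (h ∘ Neg.neg) := hh.comp_linearMap (-LinearMap.id : ℝ →ₗ[ℝ] ℝ)
  obtain ⟨r, hrq, hr⟩ := exists_tendsto_atTop_of_concaveOn hneg
    (hl.comp tendsto_neg_atTop_atBot) (hk.comp tendsto_neg_atTop_atBot)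
    (fun x => hlh (-x)) (fun x => hhk (-x))
  exact ⟨r, hrq, (hr.comp tendsto_neg_atBot_atTop).congr fun x => by simp⟩

lemma monotone_rightDeriv_of_convexOn (hg : ConvexOn ℝ univ g) :
    Monotone fun x => derivWithin g (Ioi x) x := by
  simpa only [interior_univ, monotoneOn_univ] using hg.monotoneOn_rightDeriv

lemma integral_rightDeriv_of_convexOn (hg : ConvexOn ℝ univ g) (x y : ℝ) :
    ∫ t in x..y, derivWithin g (Ioi t) t = g y - g x :=
  intervalIntegral.integral_eq_sub_of_hasDeriv_right
    ((hg.continuousOn isOpen_univ).mono (subset_univ _))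
    (fun _ _ => hg.hasDerivWithinAt_rightDeriv_of_mem_interior (by simp))
    (monotone_rightDeriv_of_convexOn hg).intervalIntegrable

lemma rightDeriv_mem_Icc_of_convexOn (hg : ConvexOn ℝ univ g) (x : ℝ) :
    derivWithin g (Ioi x) x ∈ Icc (g x - g (x - 1)) (g (x + 1) - g x) := by
  have hx : x ∈ interior univ := by simp
  constructor
  · calc g x - g (x - 1) = slope g (x - 1) x := by simp [slope_def_field]
      _ ≤ derivWithin g (Iio x) x :=
        hg.slope_le_leftDeriv_of_mem_interior (mem_univ _) hx (sub_one_lt x)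
      _ ≤ derivWithin g (Ioi x) x := hg.leftDeriv_le_rightDeriv_of_mem_interior hx
  · calc derivWithin g (Ioi x) x ≤ slope g x (x + 1) :=
        hg.rightDeriv_le_slope_of_mem_interior hx (mem_univ _) (lt_add_one x)
      _ = g (x + 1) - g x := by simp [slope_def_field]

lemma tendsto_rightDeriv_of_convexOn (hg : ConvexOn ℝ univ g) {F : Filter ℝ}
    (hadd : Tendsto (· + 1) F F) (hsub : Tendsto (· - 1) F F)
    (ha : Tendsto (fun x => g x - s * x) F (𝓝 a)) :
    Tendsto (fun x => derivWithin g (Ioi x) x) F (𝓝 s) := by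
  have hbackward : Tendsto (fun x => g x - g (x - 1)) F (𝓝 (a - a + s)) :=
    ((ha.sub (ha.comp hsub)).add_const s).congr fun x => by
      simp only [Function.comp_apply]
      ring
  have hforward : Tendsto (fun x => g (x + 1) - g x) F (𝓝 (a - a + s)) :=
    (((ha.comp hadd).sub ha).add_const s).congr fun x => by
      simp only [Function.comp_apply]
      ring
  rw [sub_self, zero_add] at hbackward hforward
  exact tendsto_of_tendsto_of_tendsto_of_le_of_le hbackward hforward
    (fun x => (rightDeriv_mem_Icc_of_convexOn hg x).1)
    (fun x => (rightDeriv_mem_Icc_of_convexOn hg x).2)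

end ConvexFunctions

section DistributionFunctions

lemma stieltjesFunction_ae_eq {f : ℝ → ℝ} (hf : Monotone f) :
    hf.stieltjesFunction =ᵐ[volume] f := by
  filter_upwards [hf.countable_not_continuousAt.ae_notMem volume] with x hx
  have hx : ContinuousAt f x := by simpa using hx
  exact hx.continuousWithinAt.rightLim_eq

lemma exists_integral_cdf_eq_sub {g : ℝ → ℝ} (hg : ConvexOn ℝ univ g) {a b : ℝ}
    (hbot : Tendsto g atBot (𝓝 b)) (htop : Tendsto (fun x => g x - x) atTop (𝓝 a)) :
    ∃ ρ : ProbabilityMeasure ℝ, ∀ x y, ∫ t in x..y, cdf ρ t = g y - g x := by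
  have hmono := monotone_rightDeriv_of_convexOn hg
  set S := hmono.stieltjesFunction
  have hS0 : Tendsto S atBot (𝓝 0) := tendsto_rightLim_atBot_of_tendsto
    (tendsto_rightDeriv_of_convexOn hg (tendsto_atBot_add_const_right _ 1 tendsto_id)
      (tendsto_atBot_add_const_right _ (-1) tendsto_id) (by simpa using hbot))
  have hS1 : Tendsto S atTop (𝓝 1) := tendsto_rightLim_atTop_of_tendsto
    (tendsto_rightDeriv_of_convexOn hg (tendsto_atTop_add_const_right _ 1 tendsto_id)
      (tendsto_atTop_add_const_right _ (-1) tendsto_id) (by simpa using htop))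
  refine ⟨⟨S.measure, S.isProbabilityMeasure hS0 hS1⟩, fun x y => ?_⟩
  calc ∫ t in x..y, cdf S.measure t = ∫ t in x..y, S t := by
        rw [cdf_measure_stieltjesFunction S hS0 hS1]
    _ = ∫ t in x..y, derivWithin g (Ioi t) t :=
        intervalIntegral.integral_congr_ae ((stieltjesFunction_ae_eq hmono).mono fun t ht _ => ht)
    _ = g y - g x := integral_rightDeriv_of_convexOn hg x y

lemma setLIntegral_measure_Iic (ρ : Measure ℝ) [SFinite ρ] (x : ℝ) :
    ∫⁻ t in Iic x, ρ (Iic t) = ∫⁻ y, ENNReal.ofReal (x - y) ∂ρ := by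
  have hS : MeasurableSet {p : ℝ × ℝ | p.1 ≤ p.2} := measurableSet_le measurable_fst measurable_snd
  calc ∫⁻ t in Iic x, ρ (Iic t) = ρ.prod (volume.restrict (Iic x)) {p | p.1 ≤ p.2} :=
        (Measure.prod_apply_symm hS).symm
    _ = ∫⁻ y, volume.restrict (Iic x) (Ici y) ∂ρ := Measure.prod_apply hS
    _ = ∫⁻ y, ENNReal.ofReal (x - y) ∂ρ := by
        simp only [Measure.restrict_apply measurableSet_Ici, Ici_inter_Iic, Real.volume_Icc]

lemma setLIntegral_measure_Ioi (ρ : Measure ℝ) [SFinite ρ] (x : ℝ) :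
    ∫⁻ t in Ioi x, ρ (Ioi t) = ∫⁻ y, ENNReal.ofReal (y - x) ∂ρ := by
  have hS : MeasurableSet {p : ℝ × ℝ | p.2 < p.1} := measurableSet_lt measurable_snd measurable_fst
  calc ∫⁻ t in Ioi x, ρ (Ioi t) = ρ.prod (volume.restrict (Ioi x)) {p | p.2 < p.1} :=
        (Measure.prod_apply_symm hS).symm
    _ = ∫⁻ y, volume.restrict (Ioi x) (Iio y) ∂ρ := Measure.prod_apply hS
    _ = ∫⁻ y, ENNReal.ofReal (y - x) ∂ρ := by
        simp only [Measure.restrict_apply measurableSet_Iio, Iio_inter_Ioi, Real.volume_Ioo]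

lemma setLIntegral_Iic_ofReal_of_tendsto {f : ℝ → ℝ} (hf : LocallyIntegrable f) (hf0 : 0 ≤ f)
    {x L : ℝ} (hL : Tendsto (fun s => ∫ t in s..x, f t) atBot (𝓝 L)) :
    ∫⁻ t in Iic x, ENNReal.ofReal (f t) = ENNReal.ofReal L := by
  have hint : IntegrableOn f (Iic x) :=
    integrableOn_Iic_of_intervalIntegral_norm_tendsto L x
      (fun s => (hf.integrableOn_isCompact isCompact_Icc).mono_set Ioc_subset_Icc_self) tendsto_id
      (hL.congr fun s => by simp only [id, Real.norm_of_nonneg (hf0 _)])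
  rw [← ofReal_integral_eq_lintegral_ofReal hint (Eventually.of_forall hf0),
    tendsto_nhds_unique (intervalIntegral_tendsto_integral_Iic x hint tendsto_id) hL]

lemma setLIntegral_Ioi_ofReal_of_tendsto {f : ℝ → ℝ} (hf : LocallyIntegrable f) (hf0 : 0 ≤ f)
    {x L : ℝ} (hL : Tendsto (fun s => ∫ t in x..s, f t) atTop (𝓝 L)) :
    ∫⁻ t in Ioi x, ENNReal.ofReal (f t) = ENNReal.ofReal L := by
  have hint : IntegrableOn f (Ioi x) :=
    integrableOn_Ioi_of_intervalIntegral_norm_tendsto L x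
      (fun s => (hf.integrableOn_isCompact isCompact_Icc).mono_set Ioc_subset_Icc_self) tendsto_id
      (hL.congr fun s => by simp only [id, Real.norm_of_nonneg (hf0 _)])
  rw [← ofReal_integral_eq_lintegral_ofReal hint (Eventually.of_forall hf0),
    tendsto_nhds_unique (intervalIntegral_tendsto_integral_Ioi x hint tendsto_id) hL]

section Primitive

variable {ρ : Measure ℝ} {g : ℝ → ℝ} {a b : ℝ}

lemma le_of_integral_cdf_of_tendsto_atBot
    (hg : ∀ x y, ∫ t in x..y, cdf ρ t = g y - g x) (hbot : Tendsto g atBot (𝓝 b)) (x : ℝ) :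
    b ≤ g x := by
  have hmono : Monotone g := fun y z hyz => sub_nonneg.1 <|
    (hg y z).symm ▸ intervalIntegral.integral_nonneg hyz fun t _ => cdf_nonneg ρ t
  exact hmono.le_of_tendsto hbot x

lemma le_sub_of_integral_cdf_of_tendsto_atTop
    (hg : ∀ x y, ∫ t in x..y, cdf ρ t = g y - g x)
    (htop : Tendsto (fun x => g x - x) atTop (𝓝 a)) (x : ℝ) : a ≤ g x - x := by
  have hanti : Antitone fun y => g y - y := by
    intro y z hyz
    have hle : ∫ t in y..z, cdf ρ t ≤ ∫ _ in y..z, 1 :=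
      intervalIntegral.integral_mono hyz (monotone_cdf ρ).intervalIntegrable (by simp)
        (cdf_le_one ρ)
    rw [hg, intervalIntegral.integral_const, smul_eq_mul, mul_one] at hle
    linarith
  exact hanti.le_of_tendsto htop x

variable [IsProbabilityMeasure ρ]

lemma lintegral_ofReal_const_sub_of_integral_cdf
    (hg : ∀ x y, ∫ t in x..y, cdf ρ t = g y - g x) (hbot : Tendsto g atBot (𝓝 b)) (x : ℝ) :
    ∫⁻ y, ENNReal.ofReal (x - y) ∂ρ = ENNReal.ofReal (g x - b) := by
  simp_rw [← setLIntegral_measure_Iic, ← ofReal_cdf]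
  refine setLIntegral_Iic_ofReal_of_tendsto (monotone_cdf ρ).locallyIntegrable (cdf_nonneg ρ) ?_
  simp_rw [hg]
  exact hbot.const_sub (g x)

lemma lintegral_ofReal_sub_const_of_integral_cdf
    (hg : ∀ x y, ∫ t in x..y, cdf ρ t = g y - g x)
    (htop : Tendsto (fun x => g x - x) atTop (𝓝 a)) (x : ℝ) :
    ∫⁻ y, ENNReal.ofReal (y - x) ∂ρ = ENNReal.ofReal (g x - x - a) := by
  have htail (t : ℝ) : ρ (Ioi t) = ENNReal.ofReal (1 - cdf ρ t) := by
    rw [← compl_Iic, prob_compl_eq_one_sub measurableSet_Iic, ← ofReal_cdf,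
      ENNReal.ofReal_sub _ (cdf_nonneg ρ t), ENNReal.ofReal_one]
  have hanti : Antitone fun t => 1 - cdf ρ t := fun _ _ hst =>
    sub_le_sub_left (monotone_cdf ρ hst) 1
  simp_rw [← setLIntegral_measure_Ioi, htail]
  refine setLIntegral_Ioi_ofReal_of_tendsto hanti.locallyIntegrable
    (fun t => sub_nonneg.2 (cdf_le_one ρ t)) ((htop.const_sub (g x - x)).congr fun s => ?_)
  rw [intervalIntegral.integral_sub (by simp) (monotone_cdf ρ).intervalIntegrable, hg,
    intervalIntegral.integral_const, smul_eq_mul]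
  ring

lemma lintegral_ofReal_abs_sub_of_integral_cdf
    (hg : ∀ x y, ∫ t in x..y, cdf ρ t = g y - g x) (hbot : Tendsto g atBot (𝓝 b))
    (htop : Tendsto (fun x => g x - x) atTop (𝓝 a)) (x : ℝ) :
    ∫⁻ y, ENNReal.ofReal |y - x| ∂ρ = ENNReal.ofReal (2 * g x - x - (a + b)) := by
  have habs (y : ℝ) :
      ENNReal.ofReal |y - x| = ENNReal.ofReal (x - y) + ENNReal.ofReal (y - x) := by
    rcases le_total x y with hxy | hyx
    · rw [abs_of_nonneg (sub_nonneg.2 hxy), ENNReal.ofReal_of_nonpos (sub_nonpos.2 hxy), zero_add]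
    · rw [abs_sub_comm, abs_of_nonneg (sub_nonneg.2 hyx),
        ENNReal.ofReal_of_nonpos (sub_nonpos.2 hyx), add_zero]
  calc ∫⁻ y, ENNReal.ofReal |y - x| ∂ρ
      = ∫⁻ y, ENNReal.ofReal (x - y) ∂ρ + ∫⁻ y, ENNReal.ofReal (y - x) ∂ρ := by
        simp_rw [habs]
        exact lintegral_add_left (by fun_prop) _
    _ = ENNReal.ofReal (g x - b) + ENNReal.ofReal (g x - x - a) := by
        rw [lintegral_ofReal_const_sub_of_integral_cdf hg hbot,
          lintegral_ofReal_sub_const_of_integral_cdf hg htop]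
    _ = ENNReal.ofReal (g x - b + (g x - x - a)) :=
        (ENNReal.ofReal_add (sub_nonneg.2 (le_of_integral_cdf_of_tendsto_atBot hg hbot x))
          (sub_nonneg.2 (le_sub_of_integral_cdf_of_tendsto_atTop hg htop x))).symm
    _ = ENNReal.ofReal (2 * g x - x - (a + b)) := by
        congr 1
        ring

lemma integrable_id_of_integral_cdf
    (hg : ∀ x y, ∫ t in x..y, cdf ρ t = g y - g x) (hbot : Tendsto g atBot (𝓝 b))
    (htop : Tendsto (fun x => g x - x) atTop (𝓝 a)) : Integrable (fun y => y) ρ := by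
  have habs := lintegral_ofReal_abs_sub_of_integral_cdf hg hbot htop 0
  simp_rw [sub_zero] at habs
  refine ⟨by fun_prop, (hasFiniteIntegral_iff_norm _).2 ?_⟩
  simp_rw [Real.norm_eq_abs, habs]
  exact ENNReal.ofReal_lt_top

lemma integral_abs_sub_of_integral_cdf
    (hg : ∀ x y, ∫ t in x..y, cdf ρ t = g y - g x) (hbot : Tendsto g atBot (𝓝 b))
    (htop : Tendsto (fun x => g x - x) atTop (𝓝 a)) (x : ℝ) :
    ∫ y, |y - x| ∂ρ = 2 * g x - x - (a + b) := by
  have hb := le_of_integral_cdf_of_tendsto_atBot hg hbot x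
  have ha := le_sub_of_integral_cdf_of_tendsto_atTop hg htop x
  rw [integral_eq_lintegral_of_nonneg_ae (Eventually.of_forall fun y => abs_nonneg (y - x))
      (by fun_prop), lintegral_ofReal_abs_sub_of_integral_cdf hg hbot htop,
    ENNReal.toReal_ofReal (by linarith)]

end Primitive

end DistributionFunctions

/-- The potential `U_ρ` of a measure `ρ` on the line. The Bochner integral makes it `0` when `ρ`
has no first moment, so results about it assume that the identity is `ρ`-integrable. -/
noncomputable def potential (ρ : Measure ℝ) (x : ℝ) : ℝ :=
  -∫ y, |y - x| ∂ρ

section Potential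

lemma integrable_abs_sub {ρ : Measure ℝ} [IsFiniteMeasure ρ]
    (hρ : Integrable (fun y => y) ρ) (x : ℝ) : Integrable (fun y => |y - x|) ρ :=
  (hρ.sub (integrable_const x)).abs

lemma tendsto_potential_add_atTop {ρ : Measure ℝ} [IsProbabilityMeasure ρ]
    (hρ : Integrable (fun y => y) ρ) :
    Tendsto (fun x => potential ρ x + x) atTop (𝓝 (∫ y, y ∂ρ)) := by
  have hlim : Tendsto (fun x => ∫ y, (x - |y - x|) ∂ρ) atTop (𝓝 (∫ y, y ∂ρ)) := by
    refine tendsto_integral_filter_of_dominated_convergence (fun y => |y|)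
      (Eventually.of_forall fun x => by fun_prop) ?_ hρ.abs ?_
    · filter_upwards [eventually_ge_atTop 0] with x hx
      refine Eventually.of_forall fun y => ?_
      simpa [abs_of_nonneg hx, abs_sub_comm] using abs_abs_sub_abs_le x (x - y)
    · refine Eventually.of_forall fun y => tendsto_const_nhds.congr' ?_
      filter_upwards [eventually_ge_atTop y] with x hx
      rw [abs_of_nonpos (sub_nonpos.2 hx)]
      ring
  refine hlim.congr fun x => ?_
  rw [integral_sub (integrable_const x) (integrable_abs_sub hρ x), integral_const, probReal_univ,
    one_smul, potential, neg_add_eq_sub]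

lemma potential_map_neg (ρ : Measure ℝ) (x : ℝ) :
    potential (ρ.map Neg.neg) x = potential ρ (-x) := by
  unfold potential
  rw [integral_map (by fun_prop) (by fun_prop)]
  simp_rw [← neg_add', abs_neg, sub_neg_eq_add]

lemma tendsto_potential_sub_atBot {ρ : Measure ℝ} [IsProbabilityMeasure ρ]
    (hρ : Integrable (fun y => y) ρ) :
    Tendsto (fun x => potential ρ x - x) atBot (𝓝 (-∫ y, y ∂ρ)) := by
  have : IsProbabilityMeasure (ρ.map Neg.neg) :=
    Measure.isProbabilityMeasure_map measurable_neg.aemeasurable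
  have hneg : Integrable (fun y => y) (ρ.map Neg.neg) :=
    (integrable_map_measure (by fun_prop) (by fun_prop)).2 hρ.neg
  have hlim := (tendsto_potential_add_atTop hneg).comp tendsto_neg_atBot_atTop
  rw [integral_map (by fun_prop) (by fun_prop), integral_neg] at hlim
  exact hlim.congr fun x => by
    rw [Function.comp_apply, potential_map_neg, neg_neg, sub_eq_add_neg]

theorem exists_potential_add_of_concaveOn {v : ℝ → ℝ} {a b : ℝ} (hv : ConcaveOn ℝ univ v)
    (htop : Tendsto (fun x => v x + x) atTop (𝓝 a))
    (hbot : Tendsto (fun x => v x - x) atBot (𝓝 b)) :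
    ∃ ρ : ProbabilityMeasure ℝ, Integrable (fun y => y) (ρ : Measure ℝ) ∧
      ∀ x, v x = potential ρ x + (a + b) / 2 := by
  -- `g` is a primitive of the sought distribution function `(1 - v'₊) / 2`.
  set g : ℝ → ℝ := fun x => (2⁻¹ : ℝ) • (x - v x)
  have hg : ConvexOn ℝ univ g := ((convexOn_id convex_univ).sub hv).smul (by norm_num)
  have hgbot : Tendsto g atBot (𝓝 (-b / 2)) :=
    (hbot.neg.div_const 2).congr fun x => by simp only [g, smul_eq_mul]; ring
  have hgtop : Tendsto (fun x => g x - x) atTop (𝓝 (-a / 2)) :=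
    (htop.neg.div_const 2).congr fun x => by simp only [g, smul_eq_mul]; ring
  obtain ⟨ρ, hρ⟩ := exists_integral_cdf_eq_sub hg hgbot hgtop
  refine ⟨ρ, integrable_id_of_integral_cdf hρ hgbot hgtop, fun x => ?_⟩
  rw [potential, integral_abs_sub_of_integral_cdf hρ hgbot hgtop]
  simp only [g, smul_eq_mul]
  ring

theorem exists_potential_eq_of_tendsto_sub_potential {ν : Measure ℝ} [IsProbabilityMeasure ν]
    {v : ℝ → ℝ} (hv : ConcaveOn ℝ univ v) (hν : Integrable (fun y => y) ν)
    (hvν : Tendsto (fun x => v x - potential ν x) (cocompact ℝ) (𝓝 0)) :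
    ∃ ρ : ProbabilityMeasure ℝ, Integrable (fun y => y) (ρ : Measure ℝ) ∧
      ∀ x, v x = potential ρ x := by
  rw [cocompact_eq_atBot_atTop, tendsto_sup] at hvν
  have htop : Tendsto (fun x => v x + x) atTop (𝓝 (0 + ∫ y, y ∂ν)) :=
    (hvν.2.add (tendsto_potential_add_atTop hν)).congr fun x => by ring
  have hbot : Tendsto (fun x => v x - x) atBot (𝓝 (0 + -∫ y, y ∂ν)) :=
    (hvν.1.add (tendsto_potential_sub_atBot hν)).congr fun x => by ring
  simpa using exists_potential_add_of_concaveOn hv htop hbot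

theorem exists_potential_sub_const_of_le_of_le {μ ν : Measure ℝ} [IsProbabilityMeasure μ]
    [IsProbabilityMeasure ν] {v : ℝ → ℝ} {C : ℝ} (hv : ConcaveOn ℝ univ v)
    (hμ : Integrable (fun y => y) μ) (hν : Integrable (fun y => y) ν)
    (hμv : ∀ x, potential μ x - C ≤ v x) (hvν : ∀ x, v x ≤ potential ν x) :
    ∃ c : ℝ, 0 ≤ c ∧ ∃ ρ : ProbabilityMeasure ℝ, Integrable (fun y => y) (ρ : Measure ℝ) ∧
      ∀ x, v x = potential ρ x - c := by
  obtain ⟨a, ha, htop⟩ : ∃ a ≤ ∫ y, y ∂ν, Tendsto (fun x => v x + x) atTop (𝓝 a) :=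
    exists_tendsto_atTop_of_concaveOn (h := fun x => v x + x) (hv.add (concaveOn_id convex_univ))
      ((tendsto_potential_add_atTop hμ).sub_const C) (tendsto_potential_add_atTop hν)
      (fun x => by linarith [hμv x]) (fun x => by linarith [hvν x])
  obtain ⟨b, hb, hbot⟩ : ∃ b ≤ -∫ y, y ∂ν, Tendsto (fun x => v x - x) atBot (𝓝 b) :=
    exists_tendsto_atBot_of_concaveOn (h := fun x => v x - x) (hv.sub (convexOn_id convex_univ))
      ((tendsto_potential_sub_atBot hμ).sub_const C) (tendsto_potential_sub_atBot hν)
      (fun x => by linarith [hμv x]) (fun x => by linarith [hvν x])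
  obtain ⟨ρ, hρ, hvρ⟩ := exists_potential_add_of_concaveOn hv htop hbot
  exact ⟨-(a + b) / 2, by linarith, ρ, hρ, fun x => by rw [hvρ x]; ring⟩

lemma integral_abs_sub_sub_abs_sub {ρ : Measure ℝ} [IsFiniteMeasure ρ]
    (hρ : Integrable (fun y => y) ρ) (a b : ℝ) :
    ∫ y, (|y - b| - |y - a|) ∂ρ = potential ρ a - potential ρ b := by
  rw [integral_sub (integrable_abs_sub hρ b) (integrable_abs_sub hρ a), potential, potential]
  ring

lemma one_add_abs_sub_abs_div_mem_Icc {a b : ℝ} (hab : a < b) (y : ℝ) :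
    (1 + (|y - b| - |y - a|) / (b - a)) / 2 ∈
      Icc ((Iic a).indicator (1 : ℝ → ℝ) y) ((Iic b).indicator (1 : ℝ → ℝ) y) := by
  have hba : 0 < b - a := sub_pos.2 hab
  have hlower : -1 ≤ (|y - b| - |y - a|) / (b - a) := by
    rw [le_div_iff₀ hba]
    linarith [abs_sub_le y b a, abs_of_pos hba]
  have hupper : (|y - b| - |y - a|) / (b - a) ≤ 1 := by
    rw [div_le_one hba]
    linarith [abs_sub_le y a b, abs_sub_comm a b, abs_of_pos hba]
  constructor
  · refine indicator_apply_le' (fun hy : y ≤ a => ?_) fun _ => by linarith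
    have hone : (|y - b| - |y - a|) / (b - a) = 1 := by
      rw [div_eq_one_iff_eq hba.ne', abs_of_nonpos (by linarith), abs_of_nonpos (by linarith)]
      ring
    norm_num [hone]
  · refine le_indicator_apply (fun _ => by rw [Pi.one_apply]; linarith) fun hy => ?_
    have hby : b < y := not_le.1 hy
    have hneg_one : (|y - b| - |y - a|) / (b - a) = -1 := by
      rw [div_eq_iff hba.ne', abs_of_pos (by linarith), abs_of_pos (by linarith)]
      ring
    norm_num [hneg_one]

lemma one_sub_slope_potential_div_two_mem_Icc {ρ : Measure ℝ} [IsProbabilityMeasure ρ]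
    (hρ : Integrable (fun y => y) ρ) {a b : ℝ} (hab : a < b) :
    (1 - slope (potential ρ) a b) / 2 ∈ Icc (cdf ρ a) (cdf ρ b) := by
  have hquot : Integrable (fun y => (|y - b| - |y - a|) / (b - a)) ρ :=
    ((integrable_abs_sub hρ b).sub (integrable_abs_sub hρ a)).div_const _
  have hramp : Integrable (fun y => (1 + (|y - b| - |y - a|) / (b - a)) / 2) ρ :=
    ((integrable_const 1).add hquot).div_const 2
  have hstep (z : ℝ) : Integrable ((Iic z).indicator (1 : ℝ → ℝ)) ρ :=
    (integrable_const 1).indicator measurableSet_Iic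
  have hslope : (1 - slope (potential ρ) a b) / 2 =
      ∫ y, (1 + (|y - b| - |y - a|) / (b - a)) / 2 ∂ρ := by
    rw [integral_div, integral_add (integrable_const 1) hquot, integral_div,
      integral_abs_sub_sub_abs_sub hρ, integral_const, probReal_univ, one_smul, slope_def_field]
    ring
  simp_rw [cdf_eq_real, ← integral_indicator_one (μ := ρ) measurableSet_Iic, hslope]
  exact ⟨integral_mono (hstep a) hramp fun y => (one_add_abs_sub_abs_div_mem_Icc hab y).1,
    integral_mono hramp (hstep b) fun y => (one_add_abs_sub_abs_div_mem_Icc hab y).2⟩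

end Potential

section WeakConvergence

lemma measureReal_Ioc_eq_cdf_sub (σ : Measure ℝ) [IsProbabilityMeasure σ] {a b : ℝ} (hab : a ≤ b) :
    σ.real (Ioc a b) = cdf σ b - cdf σ a := by
  rw [cdf_eq_real, cdf_eq_real, ← Iic_sdiff_Iic,
    measureReal_sdiff (Iic_subset_Iic.2 hab) measurableSet_Iic]

variable {ι : Type*} {F : Filter ι} [F.IsCountablyGenerated] {ρ : ι → ProbabilityMeasure ℝ}
  {ρ' : ProbabilityMeasure ℝ}

theorem tendsto_of_tendsto_cdf (h : ∀ x, ContinuousAt (cdf (ρ' : Measure ℝ)) x →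
      Tendsto (fun i => cdf (ρ i : Measure ℝ) x) F (𝓝 (cdf (ρ' : Measure ℝ) x))) :
    Tendsto ρ F (𝓝 ρ') := by
  set D := {x | ContinuousAt (cdf (ρ' : Measure ℝ)) x}
  have hdense : Dense D := by
    simpa [D, compl_ofPred] using
      (monotone_cdf (ρ' : Measure ℝ)).countable_not_continuousAt.dense_compl ℝ
  refine IsPiSystem.tendsto_probabilityMeasure_of_tendsto_of_mem
    (S := {s | ∃ a ∈ D, ∃ b ∈ D, a < b ∧ Ioc a b = s}) ?_ ?_ ?_ ?_
  · exact isPiSystem_Ioc_mem D D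
  · rintro _ ⟨a, -, b, -, -, rfl⟩
    exact measurableSet_Ioc
  · intro U hU x hx
    obtain ⟨p, q, hxpq, hpq⟩ := mem_nhds_iff_exists_Ioo_subset.1 (hU.mem_nhds hx)
    obtain ⟨a, ha, hpa, hax⟩ := hdense.exists_between hxpq.1
    obtain ⟨b, hb, hxb, hbq⟩ := hdense.exists_between hxpq.2
    exact ⟨Ioc a b, ⟨a, ha, b, hb, hax.trans hxb, rfl⟩, Ioc_mem_nhds hax hxb,
      fun y hy => hpq ⟨hpa.trans hy.1, hy.2.trans_lt hbq⟩⟩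
  · rintro _ ⟨a, ha, b, hb, hab, rfl⟩
    have hIoc := (h b hb).sub (h a ha)
    simp_rw [← measureReal_Ioc_eq_cdf_sub _ hab.le] at hIoc
    exact NNReal.tendsto_coe.1 hIoc

theorem tendsto_of_tendsto_potential {c : ℝ}
    (hρ : ∀ᶠ i in F, Integrable (fun y => y) (ρ i : Measure ℝ))
    (hρ' : Integrable (fun y => y) (ρ' : Measure ℝ))
    (h : ∀ x, Tendsto (fun i => potential (ρ i) x) F (𝓝 (potential ρ' x + c))) :
    Tendsto ρ F (𝓝 ρ') := by
  have hslope (a b : ℝ) : Tendsto (fun i => (1 - slope (potential (ρ i)) a b) / 2) F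
      (𝓝 ((1 - slope (potential ρ') a b) / 2)) := by
    simp only [slope_def_field]
    simpa using ((((h b).sub (h a)).div_const (b - a)).const_sub 1).div_const 2
  refine tendsto_of_tendsto_cdf fun x hx => tendsto_order.2 ⟨fun r hr => ?_, fun r hr => ?_⟩
  · obtain ⟨z, hrz, hzx : z < x⟩ := (((hx.eventually_const_lt hr).filter_mono
      nhdsWithin_le_nhds).and (self_mem_nhdsWithin : Iio x ∈ 𝓝[<] x)).exists
    have hlim := (one_sub_slope_potential_div_two_mem_Icc hρ' hzx).1
    filter_upwards [(hslope z x).eventually_const_lt (hrz.trans_le hlim), hρ] with i hi hρi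
    exact hi.trans_le (one_sub_slope_potential_div_two_mem_Icc hρi hzx).2
  · obtain ⟨z, hzr, hxz : x < z⟩ := (((hx.eventually_lt_const hr).filter_mono
      nhdsWithin_le_nhds).and (self_mem_nhdsWithin : Ioi x ∈ 𝓝[>] x)).exists
    have hlim := (one_sub_slope_potential_div_two_mem_Icc hρ' hxz).2
    filter_upwards [(hslope x z).eventually_lt_const (hlim.trans_lt hzr), hρ] with i hi hρi
    exact (one_sub_slope_potential_div_two_mem_Icc hρi hxz).1.trans_lt hi

end WeakConvergence

lemma exists_tendsto_atTop_of_antitoneOn_Ici {ι α : Type*} [Preorder ι] [IsDirectedOrder ι]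
    [ConditionallyCompleteLinearOrder α] [TopologicalSpace α] [OrderTopology α] {f : ι → α} {t₀ : ι}
    (hf : AntitoneOn f (Ici t₀)) (hbdd : BddBelow (f '' Ici t₀)) :
    ∃ r, Tendsto f atTop (𝓝 r) :=
  ⟨_, tendsto_comp_val_Ici_atTop.1 <| tendsto_atTop_ciInf
    (f := fun t : Ici t₀ => f t) (fun s t hst => hf s.2 t.2 hst) (by rwa [← image_eq_range])⟩

theorem stmt_17_general {ι : Type*} [Preorder ι] [IsDirectedOrder ι]
    [(atTop : Filter ι).IsCountablyGenerated] {t₀ : ι} {u : ℝ → ι → ℝ}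
    (hconc : ∀ t, t₀ ≤ t → ConcaveOn ℝ univ fun x => u x t)
    (hmono : ∀ x, AntitoneOn (u x) (Ici t₀))
    {μ ν : Measure ℝ} [IsProbabilityMeasure μ] [IsProbabilityMeasure ν]
    (hμint : Integrable (fun y => y) μ) (hνint : Integrable (fun y => y) ν) {C : ℝ}
    (hlow : ∀ x t, t₀ ≤ t → potential μ x - C ≤ u x t)
    (hasymp : ∀ t, t₀ ≤ t →
      Tendsto (fun x => u x t - potential ν x) (cocompact ℝ) (𝓝 0)) :
    ∃ μt : ι → ProbabilityMeasure ℝ,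
      (∀ t, t₀ ≤ t → Integrable (fun y => y) (μt t : Measure ℝ) ∧
        ∀ x, u x t = potential (μt t) x) ∧
      ∃ uhat : ℝ → ℝ, (∀ x, Tendsto (fun t => u x t) atTop (𝓝 (uhat x))) ∧
      ∃ CL : ℝ, 0 ≤ CL ∧ ∃ μhat : ProbabilityMeasure ℝ,
        Tendsto μt atTop (𝓝 μhat) ∧ ∀ x, uhat x = potential μhat x - CL := by
  have : Nonempty ι := ⟨t₀⟩
  choose! μt hμt huμt using fun t (ht : t₀ ≤ t) =>
    exists_potential_eq_of_tendsto_sub_potential (hconc t ht) hνint (hasymp t ht)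
  choose uhat huhat using fun x => exists_tendsto_atTop_of_antitoneOn_Ici
    (hmono x) ⟨potential μ x - C, forall_mem_image.2 (hlow x)⟩
  have hconc_uhat : ConcaveOn ℝ univ uhat :=
    isClosed_setOfPred_concaveOn.mem_of_tendsto (tendsto_pi_nhds.2 huhat)
      ((eventually_ge_atTop t₀).mono hconc)
  have hlower (x : ℝ) : potential μ x - C ≤ uhat x :=
    ge_of_tendsto (huhat x) ((eventually_ge_atTop t₀).mono (hlow x))
  have hupper (x : ℝ) : uhat x ≤ potential (μt t₀) x := huμt t₀ le_rfl x ▸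
    le_of_tendsto (huhat x) ((eventually_ge_atTop t₀).mono fun t ht => hmono x self_mem_Ici ht ht)
  obtain ⟨CL, hCL, μhat, hμhat, huhat_eq⟩ :=
    exists_potential_sub_const_of_le_of_le hconc_uhat hμint (hμt t₀ le_rfl) hlower hupper
  refine ⟨μt, fun t ht => ⟨hμt t ht, huμt t ht⟩, uhat, huhat, CL, hCL, μhat, ?_, huhat_eq⟩
  refine tendsto_of_tendsto_potential (c := -CL) ((eventually_ge_atTop t₀).mono hμt) hμhat
    fun x => ?_
  rw [← sub_eq_add_neg, ← huhat_eq]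
  exact (huhat x).congr' ((eventually_ge_atTop t₀).mono fun t ht => huμt t ht x)

/-- Let `u` be continuous on `ℝ × ℝ₊`, concave in `x`, nonincreasing in `t`, squeezed
between potentials `U_μ - C ≤ u(·,t) ≤ U_ν`, with `u(x,t) - U_ν(x) → 0` as
`|x| → ∞` for each `t`. Then each `u(·,t)` is the potential of a probability measure
`μ_t`; moreover the pointwise limit `û(x) = lim_{t→∞} u(x,t)` exists and there are a
constant `C_L ≥ 0` and a probability measure `μ̂` with `μ_t ⇒ μ̂` weakly and
`û = U_{μ̂} - C_L`. -/
theorem stmt_17 (u : ℝ → ℝ → ℝ)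
    (hu_cont : ContinuousOn (fun p : ℝ × ℝ => u p.1 p.2) (univ ×ˢ Ici (0 : ℝ)))
    (hconc : ∀ t : ℝ, 0 ≤ t → ConcaveOn ℝ Set.univ (fun x => u x t))
    (hmono : ∀ x : ℝ, ∀ s t : ℝ, 0 ≤ s → s ≤ t → u x t ≤ u x s)
    (μ ν : Measure ℝ) [IsProbabilityMeasure μ] [IsProbabilityMeasure ν]
    (hμint : Integrable (fun y : ℝ => y) μ) (hνint : Integrable (fun y : ℝ => y) ν)
    (C : ℝ)
    (hlow : ∀ x t : ℝ, 0 ≤ t → (-∫ y, |y - x| ∂μ) - C ≤ u x t)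
    (hupp : ∀ x t : ℝ, 0 ≤ t → u x t ≤ -∫ y, |y - x| ∂ν)
    (hasymp : ∀ t : ℝ, 0 ≤ t →
      Tendsto (fun x : ℝ => u x t - (-∫ y, |y - x| ∂ν)) (Filter.cocompact ℝ) (nhds 0)) :
    ∃ μt : ℝ → ProbabilityMeasure ℝ,
      (∀ t : ℝ, 0 ≤ t → (Integrable (fun y : ℝ => y) (μt t : Measure ℝ)) ∧
        ∀ x : ℝ, u x t = -∫ y, |y - x| ∂(μt t : Measure ℝ)) ∧
      ∃ uhat : ℝ → ℝ, (∀ x : ℝ, Tendsto (fun t => u x t) atTop (nhds (uhat x))) ∧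
      ∃ CL : ℝ, 0 ≤ CL ∧ ∃ μhat : ProbabilityMeasure ℝ,
        Tendsto μt atTop (nhds μhat) ∧
        ∀ x : ℝ, uhat x = (-∫ y, |y - x| ∂(μhat : Measure ℝ)) - CL := by
  exact stmt_17_general hconc (fun x s hs t _ hst => hmono x s t hs hst) hμint hνint hlow hasymp
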